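/- Consider the labeled stochastic block model 𝒢(n, a/n, b/n, μ, ν) with true type assignment σ*, n even, and a weight function w : 𝓛 → [−1,1]. Assume the technical conditions Σ_ℓ a·μ(ℓ)·w(ℓ)² > 8·ln 2 and Σ_ℓ b·ν(ℓ)·w(ℓ)² > 8·ln 2, and assume Σ_ℓ (a·μ(ℓ) − b·ν(ℓ))·w(ℓ) / √(Σ_ℓ (a·μ(ℓ) + b·ν(ℓ))·w(ℓ)²) > √(128·ln 2). Then asymptotically almost surely every minimizer σ̂ of the weighted minimum bisection — that is, every σ̂ ∈ {±1}^n with Σ_u σ̂_u = 0 minimizing Σ_{(u,v): σ̂_u ≠ σ̂_v} W_{uv} over all balanced assignments — satisfies Q(σ*, σ̂) > 0. -/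

import Mathlib

open Finset Filter Real

namespace LSBM

/-- Ordered pairs `u < v` of vertices. -/
abbrev Pairs (n : ℕ) := {p : Fin n × Fin n // p.1 < p.2}

/-- A labeled-graph configuration: each pair `u < v` carries `none` (no edge)
or `some ℓ` (an edge with label `ℓ`). -/
abbrev EdgeConf (n : ℕ) (L : Type*) := Pairs n → Option L

variable {L : Type*}

/-- The label (if any) on the edge between `u` and `v`. -/
def getLabel {n : ℕ} (E : EdgeConf n L) (u v : Fin n) : Option L :=
  if h : u < v then E ⟨(u, v), h⟩ else if h' : v < u then E ⟨(v, u), h'⟩ else none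

/-- Per-pair mass under the labeled stochastic block model. -/
noncomputable def sbmPairMass (n : ℕ) (a b : ℝ) (μ ν : L → ℝ) (same : Bool) : Option L → ℝ
  | none => if same then 1 - a / n else 1 - b / n
  | some ℓ => if same then (a / n) * μ ℓ else (b / n) * ν ℓ

/-- Joint mass of a (type assignment, labeled graph) outcome under the labeled SBM. -/
noncomputable def sbmMass (n : ℕ) (a b : ℝ) (μ ν : L → ℝ)
    (x : (Fin n → Bool) × EdgeConf n L) : ℝ :=
  (1 / 2 : ℝ) ^ n *
    ∏ p : Pairs n, sbmPairMass n a b μ ν (x.1 p.1.1 == x.1 p.1.2) (x.2 p)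

/-- Probability of an event under the labeled SBM (joint in types and graph). -/
noncomputable def sbmProb [Fintype L] (n : ℕ) (a b : ℝ) (μ ν : L → ℝ)
    (A : Set ((Fin n → Bool) × EdgeConf n L)) : ℝ :=
  ∑ x : (Fin n → Bool) × EdgeConf n L, A.indicator (sbmMass n a b μ ν) x

/-- Probability of a labeled-graph event under the labeled SBM (marginal over types). -/
noncomputable def sbmGraphProb [Fintype L] (n : ℕ) (a b : ℝ) (μ ν : L → ℝ)
    (A : Set (EdgeConf n L)) : ℝ :=
  sbmProb n a b μ ν {x | x.2 ∈ A}

/-- Conditional (given the type assignment `σ`) probability of a labeled-graph event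
under the labeled SBM. -/
noncomputable def sbmCondProb [Fintype L] (n : ℕ) (a b : ℝ) (μ ν : L → ℝ)
    (σ : Fin n → Bool) (A : Set (EdgeConf n L)) : ℝ :=
  ∑ E : EdgeConf n L, A.indicator
    (fun E' => ∏ p : Pairs n, sbmPairMass n a b μ ν (σ p.1.1 == σ p.1.2) (E' p)) E

/-- Conditional (given `σ`) expectation of a function of the labeled graph. -/
noncomputable def sbmCondExp [Fintype L] (n : ℕ) (a b : ℝ) (μ ν : L → ℝ)
    (σ : Fin n → Bool) (f : EdgeConf n L → ℝ) : ℝ :=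
  ∑ E : EdgeConf n L,
    (∏ p : Pairs n, sbmPairMass n a b μ ν (σ p.1.1 == σ p.1.2) (E p)) * f E

/-- Per-pair mass under the labeled Erdős–Rényi model. -/
noncomputable def erPairMass (n : ℕ) (a b : ℝ) (μ ν : L → ℝ) : Option L → ℝ
  | none => 1 - (a + b) / (2 * n)
  | some ℓ => ((a + b) / (2 * n)) * ((a * μ ℓ + b * ν ℓ) / (a + b))

/-- Mass of a labeled graph under the labeled Erdős–Rényi model. -/
noncomputable def erMass [Fintype L] (n : ℕ) (a b : ℝ) (μ ν : L → ℝ) (E : EdgeConf n L) : ℝ :=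
  ∏ p : Pairs n, erPairMass n a b μ ν (E p)

/-- Probability of a labeled-graph event under the labeled Erdős–Rényi model. -/
noncomputable def erProb [Fintype L] (n : ℕ) (a b : ℝ) (μ ν : L → ℝ)
    (A : Set (EdgeConf n L)) : ℝ :=
  ∑ E : EdgeConf n L, A.indicator (erMass n a b μ ν) E

/-- Expectation of a function of the labeled graph under the labeled Erdős–Rényi model. -/
noncomputable def erExp [Fintype L] (n : ℕ) (a b : ℝ) (μ ν : L → ℝ)
    (f : EdgeConf n L → ℝ) : ℝ :=
  ∑ E : EdgeConf n L, erMass n a b μ ν E * f E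

/-- `μ` is a probability distribution on the (finite) label set. -/
def IsProbVec [Fintype L] (μ : L → ℝ) : Prop := (∀ ℓ, 0 ≤ μ ℓ) ∧ ∑ ℓ, μ ℓ = 1

/-- The reconstruction-threshold parameter `τ`. -/
noncomputable def tau [Fintype L] (a b : ℝ) (μ ν : L → ℝ) : ℝ :=
  ∑ ℓ, (a * μ ℓ - b * ν ℓ) ^ 2 / (2 * (a * μ ℓ + b * ν ℓ))

/-- The weighted adjacency matrix `W` with `W u v = A u v * w (L u v)`. -/
def Wmat {n : ℕ} (w : L → ℝ) (E : EdgeConf n L) : Matrix (Fin n) (Fin n) ℝ :=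
  fun u v => match getLabel E u v with
    | none => 0
    | some ℓ => w ℓ

/-- The ±1 vector associated with a Boolean type assignment (`true ↦ +1`). -/
def signVec {n : ℕ} (σ : Fin n → Bool) : Fin n → ℝ := fun u => if σ u then 1 else -1

/-- `x` is a vector with entries in `{±1}`. -/
def IsSignVec {n : ℕ} (x : Fin n → ℝ) : Prop := ∀ u, x u = 1 ∨ x u = -1

/-- Componentwise sign of a real vector. -/
noncomputable def signR {n : ℕ} (x : Fin n → ℝ) : Fin n → ℝ :=
  fun u => if 0 ≤ x u then 1 else -1

open Classical in
/-- Hamming distance between two vectors. -/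
noncomputable def hamming {n : ℕ} (x y : Fin n → ℝ) : ℕ :=
  (univ.filter fun u => x u ≠ y u).card

/-- The overlap `Q(x, y) = 1/2 - (1/n) min(d(x,y), d(x,-y))`. -/
noncomputable def overlap (n : ℕ) (x y : Fin n → ℝ) : ℝ :=
  1 / 2 - (1 / n) * min (hamming x y : ℝ) (hamming x (-y) : ℝ)

open Classical in
/-- The weight of the cut induced by a ±1 assignment `σ`:
`∑_{(u,v) : u < v, σ_u ≠ σ_v} W_{uv}`. -/
noncomputable def cutWeight {n : ℕ} (w : L → ℝ) (E : EdgeConf n L) (σ : Fin n → ℝ) : ℝ :=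
  ∑ p : Pairs n, if σ p.1.1 ≠ σ p.1.2 then Wmat w E p.1.1 p.1.2 else 0

/-- The quadratic form `xᵀ M x`. -/
def quadForm {n : ℕ} (M : Matrix (Fin n) (Fin n) ℝ) (x : Fin n → ℝ) : ℝ :=
  ∑ u, ∑ v, x u * M u v * x v

/-- The entrywise inner product `⟨A, B⟩ = ∑_{u,v} A u v * B u v`. -/
def mInner {n : ℕ} (A B : Matrix (Fin n) (Fin n) ℝ) : ℝ :=
  ∑ u, ∑ v, A u v * B u v

/-- The degree of a vertex. -/
def degree {n : ℕ} (E : EdgeConf n L) (u : Fin n) : ℕ :=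
  (univ.filter fun v => (getLabel E u v).isSome).card

open Classical in
/-- The weighted adjacency matrix of the graph obtained by removing all edges incident
to vertices of degree larger than `(3/2)·(a+b)/2`. -/
noncomputable def prunedW {n : ℕ} (a b : ℝ) (w : L → ℝ) (E : EdgeConf n L) :
    Matrix (Fin n) (Fin n) ℝ :=
  fun u v =>
    if (degree E u : ℝ) ≤ (3 / 2) * ((a + b) / 2) ∧
       (degree E v : ℝ) ≤ (3 / 2) * ((a + b) / 2)
    then Wmat w E u v else 0

/-- The conditional (given `σ`) entrywise expectation `E[W | σ]` of the weighted
adjacency matrix. -/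
noncomputable def condEW {n : ℕ} [Fintype L] (a b : ℝ) (μ ν w : L → ℝ)
    (σ : Fin n → Bool) : Matrix (Fin n) (Fin n) ℝ :=
  fun u v =>
    if u = v then 0
    else if σ u = σ v then (a / n) * ∑ ℓ, μ ℓ * w ℓ
    else (b / n) * ∑ ℓ, ν ℓ * w ℓ

/-- The matrix `D' = W' - (α/n) J` used in the spectral method, where
`α = (1/2)·∑_ℓ w(ℓ)(aμ(ℓ)+bν(ℓ))` and `J` is the all-one matrix. -/
noncomputable def Dmat {n : ℕ} [Fintype L] (a b : ℝ) (μ ν w : L → ℝ)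
    (E : EdgeConf n L) : Matrix (Fin n) (Fin n) ℝ :=
  fun u v => prunedW a b w E u v - ((1 / 2) * ∑ ℓ, w ℓ * (a * μ ℓ + b * ν ℓ)) / n

/-- The spectral norm (ℓ²-operator norm) of a real square matrix. -/
noncomputable def specNorm {n : ℕ} (M : Matrix (Fin n) (Fin n) ℝ) : ℝ :=
  ‖Matrix.toEuclideanCLM (𝕜 := ℝ) M‖

/-- The number of `k`-cycles carrying the label sequence `ℓ`, in the canonical
orientation: starting from the minimal-index vertex of the cycle toward its
neighbor of smaller index. -/
def cycleCount [DecidableEq L] (n k : ℕ) (E : EdgeConf n L) (ℓ : Fin k → L) : ℕ :=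
  if hk : 0 < k then
    haveI : NeZero k := ⟨hk.ne'⟩
    (univ.filter fun c : Fin k → Fin n =>
      Function.Injective c ∧ (∀ i, c 0 ≤ c i) ∧
      c 1 < c ⟨k - 1, Nat.sub_lt hk one_pos⟩ ∧
      ∀ i : Fin k, getLabel E (c i) (c (i + 1)) = some (ℓ i)).card
  else 0

/-- The Poisson probability mass function. -/
noncomputable def poissonPMF (m : ℝ) (j : ℕ) : ℝ :=
  Real.exp (-m) * m ^ j / (Nat.factorial j)

/-- The mean cycle count `λ([ℓ]_k)` under the labeled Erdős–Rényi model. -/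
noncomputable def lamER [Fintype L] (a b : ℝ) (μ ν : L → ℝ) {k : ℕ} (ℓ : Fin k → L) : ℝ :=
  (1 / ((2 : ℝ) ^ (k + 1) * k)) * ∏ i, (a * μ (ℓ i) + b * ν (ℓ i))

/-- The mean cycle count `ξ([ℓ]_k)` under the labeled SBM. -/
noncomputable def xiSBM [Fintype L] (a b : ℝ) (μ ν : L → ℝ) {k : ℕ} (ℓ : Fin k → L) : ℝ :=
  (1 / ((2 : ℝ) ^ (k + 1) * k)) *
    (∏ i, (a * μ (ℓ i) + b * ν (ℓ i)) + ∏ i, (a * μ (ℓ i) - b * ν (ℓ i)))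

/-- The per-pair likelihood-ratio factor `W_{uv}(G, L, σ)` (SBM versus labeled
Erdős–Rényi), as a function of the pair status (`same` type or not) and the
edge/label information on the pair. -/
noncomputable def likPair (n : ℕ) (a b : ℝ) (μ ν : L → ℝ) (same : Bool) :
    Option L → ℝ
  | some ℓ =>
      if same then 2 * a * μ ℓ / (a * μ ℓ + b * ν ℓ)
      else 2 * b * ν ℓ / (a * μ ℓ + b * ν ℓ)
  | none =>
      if same then (1 - a / n) / (1 - (a + b) / (2 * n))
      else (1 - b / n) / (1 - (a + b) / (2 * n))

/-- The likelihood ratio `Y_n = ℙ_n / ℙ'_n` of the labeled SBM with respect to the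
labeled Erdős–Rényi model. -/
noncomputable def Ylik [Fintype L] (n : ℕ) (a b : ℝ) (μ ν : L → ℝ)
    (E : EdgeConf n L) : ℝ :=
  (1 / 2 : ℝ) ^ n * ∑ σ : Fin n → Bool,
    ∏ p : Pairs n, likPair n a b μ ν (σ p.1.1 == σ p.1.2) (E p)


section Aux

lemma sum_pairs {n : ℕ} (f : Fin n → Fin n → ℝ) (hf : ∀ u v, f u v = f v u) :
    2 * ∑ p : Pairs n, f p.1.1 p.1.2 = (∑ u, ∑ v, f u v) - ∑ u, f u u := by
  have h1 : ∑ p : Pairs n, f p.1.1 p.1.2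
      = ∑ p : Fin n × Fin n, if p.1 < p.2 then f p.1 p.2 else 0 := by
    rw [← Finset.sum_filter]
    exact (Finset.sum_subtype (Finset.univ.filter fun p : Fin n × Fin n => p.1 < p.2)
      (by simp) (fun p : Fin n × Fin n => f p.1 p.2)).symm
  have h2 : ∑ p : Pairs n, f p.1.1 p.1.2
      = ∑ p : Fin n × Fin n, if p.2 < p.1 then f p.1 p.2 else 0 := by
    rw [h1, Fintype.sum_prod_type, Fintype.sum_prod_type, Finset.sum_comm]
    refine Finset.sum_congr rfl fun u _ => Finset.sum_congr rfl fun v _ => ?_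
    simp only [hf u v]
  have h3 : ∑ u, f u u = ∑ p : Fin n × Fin n, if p.1 = p.2 then f p.1 p.2 else 0 := by
    rw [Fintype.sum_prod_type]
    simp
  have h4 : ∑ u, ∑ v, f u v = ∑ p : Fin n × Fin n, f p.1 p.2 := by
    rw [Fintype.sum_prod_type]
  rw [two_mul, h4, h3]
  nth_rewrite 1 [h1]
  rw [h2, ← Finset.sum_add_distrib, ← Finset.sum_sub_distrib]
  refine Finset.sum_congr rfl fun p _ => ?_
  rcases lt_trichotomy p.1 p.2 with h | h | h
  · simp [h, h.ne, h.not_gt]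
  · simp [h]
  · simp [h, h.ne', h.not_gt]

lemma sum_pairs_mul {n : ℕ} (x : Fin n → ℝ) (hx : IsSignVec x) :
    2 * ∑ p : Pairs n, x p.1.1 * x p.1.2 = (∑ u, x u) ^ 2 - n := by
  rw [sum_pairs (fun u v => x u * x v) (fun u v => mul_comm _ _)]
  have h : ∀ u, x u * x u = 1 := fun u => by rcases hx u with h | h <;> simp [h]
  simp only [h]
  rw [pow_two, Finset.sum_mul_sum]
  simp

lemma isSign_mul {n : ℕ} {x y : Fin n → ℝ} (hx : IsSignVec x) (hy : IsSignVec y) :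
    IsSignVec (fun u => x u * y u) := fun u => by
  rcases hx u with h | h <;> rcases hy u with h' | h' <;> simp [h, h']

lemma isSign_signVec {n : ℕ} (σ : Fin n → Bool) : IsSignVec (signVec σ) := fun u => by
  unfold signVec; cases σ u <;> simp

lemma exists_balanced (m : ℕ) (s : Fin (2 * m) → ℝ) (hs : IsSignVec s) :
    ∃ t : Fin (2 * m) → ℝ, IsSignVec t ∧ ∑ u, t u = 0 ∧
      (2 * m : ℝ) - |∑ u, s u| ≤ ∑ u, t u * s u := by
  classical
  set P := Finset.univ.filter fun u => s u = 1 with hP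
  have key : ∀ T : Finset (Fin (2*m)), T.card = m →
      ∑ u, (if u ∈ T then (1:ℝ) else -1) = 0 := by
    intro T hT
    have : ∀ u, (if u ∈ T then (1:ℝ) else -1) = 2 * (if u ∈ T then (1:ℝ) else 0) - 1 := by
      intro u; split_ifs <;> norm_num
    simp only [this, Finset.sum_sub_distrib, ← Finset.mul_sum]
    simp [hT]
  have hsgn : ∀ T : Finset (Fin (2*m)), IsSignVec (fun u => if u ∈ T then (1:ℝ) else -1) := by
    intro T u; by_cases h : u ∈ T <;> simp [h]
  rcases le_total m P.card with h | h
  · obtain ⟨T, hTP, hT⟩ := Finset.exists_subset_card_eq h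
    refine ⟨_, hsgn T, key T hT, ?_⟩
    have : ∀ u, (if u ∈ T then (1:ℝ) else -1) * s u
        = 1 - (s u - (if u ∈ T then (1:ℝ) else -1)) := by
      intro u
      by_cases hu : u ∈ T
      · have : s u = 1 := by simpa [hP] using hTP hu
        simp [hu, this]
      · rcases hs u with h' | h' <;> simp [hu, h']
    simp only [this, Finset.sum_sub_distrib, key T hT]
    have := le_abs_self (∑ u, s u)
    simp; linarith
  · obtain ⟨T, hTP, _, hT⟩ := Finset.exists_subsuperset_card_eq (Finset.subset_univ P) h
      (by simp; omega)
    refine ⟨_, hsgn T, key T hT, ?_⟩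
    have : ∀ u, (if u ∈ T then (1:ℝ) else -1) * s u
        = 1 - ((if u ∈ T then (1:ℝ) else -1) - s u) := by
      intro u
      by_cases hu : u ∈ T
      · simp [hu]
      · have : s u = -1 := by
          rcases hs u with h' | h'
          · exact absurd (hTP (by simp [hP, h'])) hu
          · exact h'
        simp [hu, this]
    simp only [this, Finset.sum_sub_distrib, key T hT]
    have := neg_abs_le (∑ u, s u)
    simp; linarith

lemma overlap_orth {n : ℕ} (hn : 0 < n) (x y : Fin n → ℝ) (hx : IsSignVec x) (hy : IsSignVec y)
    (h : ¬ 0 < overlap n x y) : ∑ u, y u * x u = 0 := by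
  classical
  have e1 : (hamming x y : ℝ) = ∑ u, (1 - y u * x u) / 2 := by
    unfold hamming
    rw [Finset.card_filter]
    push_cast
    refine Finset.sum_congr rfl fun u _ => ?_
    rcases hx u with h | h <;> rcases hy u with h' | h' <;> rw [h, h'] <;> norm_num
  have e2 : (hamming x (-y) : ℝ) = ∑ u, (1 + y u * x u) / 2 := by
    unfold hamming
    rw [Finset.card_filter]
    push_cast
    refine Finset.sum_congr rfl fun u _ => ?_
    have hz : (-y) u = - y u := rfl
    rcases hx u with h | h <;> rcases hy u with h' | h' <;> rw [h'] at hz <;>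
      rw [h, hz, h'] <;> norm_num
  rw [← Finset.sum_div, Finset.sum_sub_distrib] at e1
  rw [← Finset.sum_div, Finset.sum_add_distrib] at e2
  simp at e1 e2
  unfold overlap at h
  have hn' : (0:ℝ) < n := by exact_mod_cast hn
  have : (n:ℝ) / 2 ≤ min (hamming x y : ℝ) (hamming x (-y) : ℝ) := by
    by_contra hc
    apply h
    push Not at hc
    have : 1 / (n:ℝ) * min (hamming x y : ℝ) (hamming x (-y) : ℝ) < 1 / n * (n / 2) :=
      mul_lt_mul_of_pos_left hc (by positivity)
    have h2 : 1 / (n:ℝ) * (n / 2) = 1 / 2 := by field_simp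
    linarith
  have a1 := this.trans (min_le_left _ _)
  have a2 := this.trans (min_le_right _ _)
  linarith

lemma sum_sq_sign (n : ℕ) :
    ∑ σ : Fin n → Bool, (∑ u, signVec σ u) ^ 2 = n * 2 ^ n := by
  classical
  have h : ∀ u v : Fin n, ∑ σ : Fin n → Bool, signVec σ u * signVec σ v
      = if u = v then 2 ^ n else 0 := by
    intro u v
    split_ifs with huv
    · subst huv
      have : ∀ σ : Fin n → Bool, signVec σ u * signVec σ u = 1 := fun σ => by
        rcases isSign_signVec σ u with h | h <;> simp [h]
      simp [this]
    · have inv : Function.Involutive (fun σ : Fin n → Bool => Function.update σ u (!σ u)) := by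
        intro σ; simp
      have e := Equiv.sum_comp (inv.toPerm _) (fun σ : Fin n → Bool => signVec σ u * signVec σ v)
      have : ∀ σ : Fin n → Bool, signVec ((inv.toPerm _) σ) u * signVec ((inv.toPerm _) σ) v
          = - (signVec σ u * signVec σ v) := by
        intro σ
        have h1 : signVec (Function.update σ u (!σ u)) u = - signVec σ u := by
          unfold signVec; simp only [Function.update_self]; cases σ u <;> simp
        have h2 : signVec (Function.update σ u (!σ u)) v = signVec σ v := by
          unfold signVec; simp only [Function.update_of_ne (Ne.symm huv)]
        rw [Function.Involutive.coe_toPerm, h1, h2]; ring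
      simp only [this, Finset.sum_neg_distrib] at e
      linarith
  simp_rw [pow_two (∑ u, _), Finset.sum_mul_sum]
  rw [Finset.sum_comm]
  simp_rw [Finset.sum_comm (s := (Finset.univ : Finset (Fin n → Bool))), h]
  simp

/-- weight of an edge status -/
def wopt (w : L → ℝ) : Option L → ℝ
  | none => 0
  | some ℓ => w ℓ

lemma cutWeight_eq {n : ℕ} (w : L → ℝ) (E : EdgeConf n L) (x : Fin n → ℝ) (hx : IsSignVec x) :
    cutWeight w E x = ∑ p : Pairs n, (1 - x p.1.1 * x p.1.2) / 2 * wopt w (E p) := by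
  unfold cutWeight
  refine Finset.sum_congr rfl fun p _ => ?_
  have : Wmat w E p.1.1 p.1.2 = wopt w (E p) := by
    unfold Wmat getLabel
    simp only [p.2, dif_pos]
    rcases E p with _ | l <;> rfl
  rw [this]
  rcases hx p.1.1 with h | h <;> rcases hx p.1.2 with h' | h' <;> rw [h, h'] <;> norm_num

variable [Fintype L]

lemma pair_nonneg {n : ℕ} {a b : ℝ} (ha : 0 < a) (hb : 0 < b) {μ ν : L → ℝ}
    (hμ : IsProbVec μ) (hν : IsProbVec ν) (hn : 0 < n) (han : a ≤ n) (hbn : b ≤ n) (c : Bool)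
    (o : Option L) : 0 ≤ sbmPairMass n a b μ ν c o := by
  have hn' : (0:ℝ) < n := by exact_mod_cast hn
  have h1 : a / n ≤ 1 := by rw [div_le_one hn']; exact han
  have h2 : b / n ≤ 1 := by rw [div_le_one hn']; exact hbn
  rcases o with _ | l
  · cases c <;> simp [sbmPairMass, h1, h2]
  · have := hμ.1 l
    have := hν.1 l
    cases c <;> simp only [sbmPairMass] <;> simp <;> positivity

lemma pair_sum {n : ℕ} {a b : ℝ} {μ ν : L → ℝ}
    (hμ : IsProbVec μ) (hν : IsProbVec ν) (c : Bool) :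
    ∑ o, sbmPairMass n a b μ ν c o = 1 := by
  rw [Fintype.sum_option]
  cases c <;> simp [sbmPairMass, ← Finset.mul_sum, hμ.2, hν.2]

/-- basic mgf bound -/
lemma mgf_aux {q : ℝ} (hq : 0 ≤ q) {μ : L → ℝ} (hμ : IsProbVec μ) {w : L → ℝ}
    (hw : ∀ ℓ, -1 ≤ w ℓ ∧ w ℓ ≤ 1) {lam c : ℝ} (hl0 : 0 ≤ lam) (hl : lam ≤ 1) (hc : |c| ≤ 1) :
    (1 - q) + ∑ ℓ, q * μ ℓ * Real.exp (lam * c * w ℓ)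
      ≤ Real.exp (q * (lam * c * ∑ ℓ, μ ℓ * w ℓ + lam ^ 2 * ∑ ℓ, μ ℓ * w ℓ ^ 2)) := by
  have hE : ∀ ℓ, Real.exp (lam * c * w ℓ) ≤ 1 + lam * c * w ℓ + lam ^ 2 * w ℓ ^ 2 := by
    intro ℓ
    have hwl : |w ℓ| ≤ 1 := abs_le.2 (hw ℓ)
    have hlc : |lam * c| ≤ lam := by
      rw [abs_mul, abs_of_nonneg hl0]; exact mul_le_of_le_one_right hl0 hc
    have h1 : |lam * c * w ℓ| ≤ 1 := by
      rw [abs_mul]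
      exact mul_le_one₀ (hlc.trans hl) (abs_nonneg _) hwl
    have h2 := (abs_le.1 (Real.abs_exp_sub_one_sub_id_le h1)).2
    have h3 : (lam * c * w ℓ) ^ 2 ≤ lam ^ 2 * w ℓ ^ 2 := by
      rw [mul_pow (lam * c)]
      apply mul_le_mul_of_nonneg_right _ (sq_nonneg _)
      rw [← sq_abs (lam * c)]
      exact pow_le_pow_left₀ (abs_nonneg _) hlc 2
    linarith
  have hs : ∑ ℓ, q * μ ℓ * Real.exp (lam * c * w ℓ)
      ≤ ∑ ℓ, q * μ ℓ * (1 + lam * c * w ℓ + lam ^ 2 * w ℓ ^ 2) :=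
    Finset.sum_le_sum fun ℓ _ => mul_le_mul_of_nonneg_left (hE ℓ) (mul_nonneg hq (hμ.1 ℓ))
  have he : ∑ ℓ, q * μ ℓ * (1 + lam * c * w ℓ + lam ^ 2 * w ℓ ^ 2)
      = q * ∑ ℓ, μ ℓ + q * (lam * c * ∑ ℓ, μ ℓ * w ℓ + lam ^ 2 * ∑ ℓ, μ ℓ * w ℓ ^ 2) := by
    simp only [Finset.mul_sum, ← Finset.sum_add_distrib]
    refine Finset.sum_congr rfl fun ℓ _ => ?_
    ring
  rw [he, hμ.2] at hs
  have := Real.add_one_le_exp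
    (q * (lam * c * ∑ ℓ, μ ℓ * w ℓ + lam ^ 2 * ∑ ℓ, μ ℓ * w ℓ ^ 2))
  linarith

lemma pair_mgf {n : ℕ} {a b : ℝ} (ha : 0 < a) (hb : 0 < b) {μ ν : L → ℝ}
    (hμ : IsProbVec μ) (hν : IsProbVec ν) {w : L → ℝ}
    (hw : ∀ ℓ, -1 ≤ w ℓ ∧ w ℓ ≤ 1) {lam c : ℝ} (hl0 : 0 ≤ lam) (hl : lam ≤ 1) (hc : |c| ≤ 1)
    (σ : Fin n → Bool) (u v : Fin n) :
    ∑ o, sbmPairMass n a b μ ν (σ u == σ v) o * Real.exp (lam * c * wopt w o)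
      ≤ Real.exp (1 / n * (lam * c * ((∑ ℓ, (a * μ ℓ + b * ν ℓ) * w ℓ) / 2
            + (∑ ℓ, (a * μ ℓ - b * ν ℓ) * w ℓ) / 2 * (signVec σ u * signVec σ v))
          + lam ^ 2 * ((∑ ℓ, (a * μ ℓ + b * ν ℓ) * w ℓ ^ 2) / 2
            + (∑ ℓ, (a * μ ℓ - b * ν ℓ) * w ℓ ^ 2) / 2 * (signVec σ u * signVec σ v)))) := by
  have hsum : ∀ f : L → ℝ, (∑ ℓ, (a * μ ℓ + b * ν ℓ) * f ℓ)
      = a * ∑ ℓ, μ ℓ * f ℓ + b * ∑ ℓ, ν ℓ * f ℓ := by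
    intro f; simp only [Finset.mul_sum, ← Finset.sum_add_distrib]
    exact Finset.sum_congr rfl fun ℓ _ => by ring
  have hdif : ∀ f : L → ℝ, (∑ ℓ, (a * μ ℓ - b * ν ℓ) * f ℓ)
      = a * ∑ ℓ, μ ℓ * f ℓ - b * ∑ ℓ, ν ℓ * f ℓ := by
    intro f; simp only [Finset.mul_sum, ← Finset.sum_sub_distrib]
    exact Finset.sum_congr rfl fun ℓ _ => by ring
  rw [hsum w, hdif w, hsum (fun ℓ => w ℓ ^ 2), hdif (fun ℓ => w ℓ ^ 2), Fintype.sum_option]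
  by_cases h : σ u = σ v
  · have hss : signVec σ u * signVec σ v = 1 := by
      unfold signVec; rw [h]; cases σ v <;> norm_num
    have := mgf_aux (q := a / n) (by positivity) hμ hw hl0 hl hc
    simp only [h, sbmPairMass, wopt, beq_self_eq_true, if_true, mul_zero, Real.exp_zero, mul_one]
    refine this.trans (le_of_eq ?_)
    congr 1
    rw [hss]; ring
  · have hss : signVec σ u * signVec σ v = -1 := by
      unfold signVec; revert h; cases σ u <;> cases σ v <;> norm_num
    have := mgf_aux (q := b / n) (by positivity) hν hw hl0 hl hc
    have hb' : (σ u == σ v) = false := by simpa using h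
    simp only [hb', sbmPairMass, wopt, mul_zero, Real.exp_zero, mul_one]
    simp only [Bool.false_eq_true, if_false]
    refine this.trans (le_of_eq ?_)
    congr 1
    rw [hss]; ring

end Aux

lemma cond_mgf [Fintype L] {n : ℕ} (hn : 0 < n) {a b : ℝ} (ha : 0 < a) (hb : 0 < b) {μ ν : L → ℝ}
    (hμ : IsProbVec μ) (hν : IsProbVec ν) (han : a ≤ n) (hbn : b ≤ n) {w : L → ℝ}
    (hw : ∀ ℓ, -1 ≤ w ℓ ∧ w ℓ ≤ 1) {lam : ℝ} (hl0 : 0 ≤ lam) (hl : lam ≤ 1)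
    (σ : Fin n → Bool) (t h : Fin n → ℝ) (ht : IsSignVec t) (hh : IsSignVec h)
    (ht0 : ∑ u, t u = 0) (hh0 : ∑ u, h u = 0) (hho : ∑ u, h u * signVec σ u = 0) :
    ∑ E : EdgeConf n L, (∏ p : Pairs n, sbmPairMass n a b μ ν (σ p.1.1 == σ p.1.2) (E p)) *
        Real.exp (lam * (cutWeight w E t - cutWeight w E h))
      ≤ Real.exp (1 / n * (- (lam * (∑ ℓ, (a * μ ℓ - b * ν ℓ) * w ℓ) / 8
            * (∑ u, t u * signVec σ u) ^ 2)
          + lam ^ 2 * ((∑ ℓ, (a * μ ℓ + b * ν ℓ) * w ℓ ^ 2) / 4 * (n ^ 2 +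
            (∑ u, signVec σ u) ^ 2)))) := by
  classical
  have hs := isSign_signVec σ
  set c : Pairs n → ℝ := fun p => (h p.1.1 * h p.1.2 - t p.1.1 * t p.1.2) / 2 with hc
  have hcle : ∀ p, |c p| ≤ 1 := by
    intro p
    rcases ht p.1.1 with h1 | h1 <;> rcases ht p.1.2 with h2 | h2 <;>
    rcases hh p.1.1 with h3 | h3 <;> rcases hh p.1.2 with h4 | h4 <;>
    simp only [hc, h1, h2, h3, h4] <;> norm_num
  have hE : ∀ E : EdgeConf n L,
      (∏ p : Pairs n, sbmPairMass n a b μ ν (σ p.1.1 == σ p.1.2) (E p)) *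
        Real.exp (lam * (cutWeight w E t - cutWeight w E h))
      = ∏ p : Pairs n, (sbmPairMass n a b μ ν (σ p.1.1 == σ p.1.2) (E p) *
          Real.exp (lam * c p * wopt w (E p))) := by
    intro E
    rw [Finset.prod_mul_distrib, ← Real.exp_sum, cutWeight_eq w E t ht, cutWeight_eq w E h hh,
      ← Finset.sum_sub_distrib, Finset.mul_sum]
    congr 2
    refine Finset.sum_congr rfl fun p _ => ?_
    simp only [hc]; ring
  simp only [hE]
  have hps := Finset.prod_univ_sum (fun _ : Pairs n => (Finset.univ : Finset (Option L)))
    (fun p o => sbmPairMass n a b μ ν (σ p.1.1 == σ p.1.2) o * Real.exp (lam * c p * wopt w o))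
  rw [Fintype.piFinset_univ] at hps
  rw [← hps]
  have hb1 := Finset.prod_le_prod (s := (Finset.univ : Finset (Pairs n)))
    (fun p _ => Finset.sum_nonneg fun o _ => mul_nonneg
      (pair_nonneg ha hb hμ hν hn han hbn (σ p.1.1 == σ p.1.2) o)
      (Real.exp_pos (lam * c p * wopt w o)).le)
    (fun p _ => pair_mgf ha hb hμ hν hw hl0 hl (hcle p) σ p.1.1 p.1.2)
  refine hb1.trans ?_
  rw [← Real.exp_sum]
  apply Real.exp_le_exp.2
  rw [← Finset.mul_sum]
  apply mul_le_mul_of_nonneg_left _ (by positivity)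
  set A := ∑ ℓ, (a * μ ℓ + b * ν ℓ) * w ℓ
  set Δ := ∑ ℓ, (a * μ ℓ - b * ν ℓ) * w ℓ
  set S := ∑ ℓ, (a * μ ℓ + b * ν ℓ) * w ℓ ^ 2 with hS
  set D := ∑ ℓ, (a * μ ℓ - b * ν ℓ) * w ℓ ^ 2 with hD
  have hDS : D ≤ S := by
    refine Finset.sum_le_sum fun ℓ _ => mul_le_mul_of_nonneg_right ?_ (sq_nonneg _)
    have := mul_nonneg hb.le (hν.1 ℓ)
    linarith
  have hDS' : -D ≤ S := by
    rw [hD, hS, ← Finset.sum_neg_distrib]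
    refine Finset.sum_le_sum fun ℓ _ => ?_
    have := mul_nonneg (mul_nonneg ha.le (hμ.1 ℓ)) (sq_nonneg (w ℓ))
    linarith
  have hS0 : 0 ≤ S := by linarith
  have e1 := sum_pairs_mul h hh
  have e2 := sum_pairs_mul t ht
  have e3 := sum_pairs_mul _ (isSign_mul hh hs)
  have e4 := sum_pairs_mul _ (isSign_mul ht hs)
  have e5 := sum_pairs_mul _ hs
  have e6 := sum_pairs_mul (n := n) (fun _ => 1) (fun _ => Or.inl rfl)
  simp only [hh0, ht0, hho] at e1 e2 e3
  simp at e6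
  have expand : ∑ p : Pairs n, (lam * c p * (A / 2 + Δ / 2 * (signVec σ p.1.1 * signVec σ p.1.2))
        + lam ^ 2 * (S / 2 + D / 2 * (signVec σ p.1.1 * signVec σ p.1.2)))
      = lam * A / 4 * (∑ p : Pairs n, h p.1.1 * h p.1.2)
        - lam * A / 4 * (∑ p : Pairs n, t p.1.1 * t p.1.2)
        + lam * Δ / 4 * (∑ p : Pairs n, h p.1.1 * signVec σ p.1.1 * (h p.1.2 * signVec σ p.1.2))
        - lam * Δ / 4 * (∑ p : Pairs n, t p.1.1 * signVec σ p.1.1 * (t p.1.2 * signVec σ p.1.2))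
        + lam ^ 2 * S / 2 * (∑ p : Pairs n, 1)
        + lam ^ 2 * D / 2 * (∑ p : Pairs n, signVec σ p.1.1 * signVec σ p.1.2) := by
    simp only [Finset.mul_sum, ← Finset.sum_add_distrib, ← Finset.sum_sub_distrib]
    refine Finset.sum_congr rfl fun p _ => ?_
    simp only [hc]; ring
  rw [expand]
  set X1 := ∑ p : Pairs n, h p.1.1 * h p.1.2
  set X2 := ∑ p : Pairs n, t p.1.1 * t p.1.2
  set X3 := ∑ p : Pairs n, h p.1.1 * signVec σ p.1.1 * (h p.1.2 * signVec σ p.1.2)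
  set X4 := ∑ p : Pairs n, t p.1.1 * signVec σ p.1.1 * (t p.1.2 * signVec σ p.1.2)
  set X5 := ∑ p : Pairs n, signVec σ p.1.1 * signVec σ p.1.2
  have e6' : (∑ p : Pairs n, (1:ℝ)) = (n ^ 2 - n) / 2 := by
    simp; linarith
  rw [e6']
  have x1 : X1 = - n / 2 := by linarith
  have x2 : X2 = - n / 2 := by linarith
  have x3 : X3 = - n / 2 := by linarith
  have x4 : X4 = ((∑ u, t u * signVec σ u) ^ 2 - n) / 2 := by linarith
  have x5 : X5 = ((∑ u, signVec σ u) ^ 2 - n) / 2 := by linarith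
  rw [x1, x2, x3, x4, x5]
  have k1 : 0 ≤ lam ^ 2 * ((S - D) * (∑ u, signVec σ u) ^ 2) :=
    mul_nonneg (sq_nonneg _) (mul_nonneg (by linarith) (sq_nonneg _))
  have k2 : 0 ≤ lam ^ 2 * ((S + D) * n) :=
    mul_nonneg (sq_nonneg _) (mul_nonneg (by linarith) (by positivity))
  nlinarith [k1, k2]

lemma cond_bound [Fintype L] {m : ℕ} (hm : 0 < m) {a b : ℝ} (ha : 0 < a) (hb : 0 < b)
    {μ ν : L → ℝ} (hμ : IsProbVec μ) (hν : IsProbVec ν) (han : a ≤ (2 * m : ℕ))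
    (hbn : b ≤ (2 * m : ℕ)) {w : L → ℝ} (hw : ∀ ℓ, -1 ≤ w ℓ ∧ w ℓ ≤ 1)
    {lam : ℝ} (hl0 : 0 ≤ lam) (hl : lam ≤ 1)
    (hlS : lam ^ 2 * (∑ ℓ, (a * μ ℓ + b * ν ℓ) * w ℓ ^ 2) = 8 * Real.log 2)
    (hlD : 32 * Real.log 2 ≤ lam * ∑ ℓ, (a * μ ℓ - b * ν ℓ) * w ℓ)
    (σ : Fin (2 * m) → Bool) (t h : Fin (2 * m) → ℝ) (ht : IsSignVec t) (hh : IsSignVec h)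
    (ht0 : ∑ u, t u = 0) (hh0 : ∑ u, h u = 0) (hho : ∑ u, h u * signVec σ u = 0)
    (hbal : |∑ u, signVec σ u| ≤ (2 * m : ℝ) / 10)
    (htc : (2 * m : ℝ) - |∑ u, signVec σ u| ≤ ∑ u, t u * signVec σ u) :
    ∑ E : EdgeConf (2 * m) L,
      (∏ p : Pairs (2 * m), sbmPairMass (2 * m) a b μ ν (σ p.1.1 == σ p.1.2) (E p)) *
        Real.exp (lam * (cutWeight w E t - cutWeight w E h))
      ≤ Real.exp (- (Real.log 2 * (12 / 5 * m))) := by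
  refine (cond_mgf (by omega) ha hb hμ hν han hbn hw hl0 hl σ t h ht hh ht0 hh0 hho).trans ?_
  apply Real.exp_le_exp.2
  set Δ := ∑ ℓ, (a * μ ℓ - b * ν ℓ) * w ℓ
  set S := ∑ ℓ, (a * μ ℓ + b * ν ℓ) * w ℓ ^ 2 with hS
  set T := ∑ u, t u * signVec σ u
  set M := ∑ u, signVec σ u
  have hm' : (0:ℝ) < m := by exact_mod_cast hm
  have hlog : 0 < Real.log 2 := Real.log_pos (by norm_num)
  have hT : (9 / 5 * m : ℝ) ≤ T := by linarith
  have hT2 : (9 / 5 * m : ℝ) ^ 2 ≤ T ^ 2 := pow_le_pow_left₀ (by positivity) hT 2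
  have hM2 : M ^ 2 ≤ ((2 * m : ℝ) / 10) ^ 2 := by
    rw [← sq_abs M]; exact pow_le_pow_left₀ (abs_nonneg _) hbal 2
  push_cast
  have i1 : 32 * Real.log 2 * (9 / 5 * m : ℝ) ^ 2 ≤ lam * Δ * T ^ 2 :=
    mul_le_mul hlD hT2 (by positivity) (by linarith)
  have i2 : Real.log 2 * M ^ 2 ≤ Real.log 2 * ((2 * m : ℝ) / 10) ^ 2 :=
    mul_le_mul_of_nonneg_left hM2 hlog.le
  have e : lam ^ 2 * (S / 4 * ((2 * m) ^ 2 + M ^ 2))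
      = 2 * Real.log 2 * ((2 * m) ^ 2 + M ^ 2) := by
    linear_combination (((2 * m) ^ 2 + M ^ 2) / 4) * hlS
  rw [e, one_div, inv_mul_le_iff₀ (by positivity)]
  have i3 : 0 ≤ Real.log 2 * (m : ℝ) ^ 2 := by positivity
  nlinarith [i1, i2, i3]

lemma cond_total [Fintype L] {n : ℕ} {a b : ℝ} {μ ν : L → ℝ}
    (hμ : IsProbVec μ) (hν : IsProbVec ν) (σ : Fin n → Bool) :
    ∑ E : EdgeConf n L, (∏ p : Pairs n, sbmPairMass n a b μ ν (σ p.1.1 == σ p.1.2) (E p)) = 1 := by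
  classical
  have hps := Finset.prod_univ_sum (fun _ : Pairs n => (Finset.univ : Finset (Option L)))
    (fun p o => sbmPairMass n a b μ ν (σ p.1.1 == σ p.1.2) o)
  rw [Fintype.piFinset_univ] at hps
  rw [← hps]
  simp [pair_sum hμ hν]

lemma prob_compl [Fintype L] {n : ℕ} {a b : ℝ} {μ ν : L → ℝ}
    (hμ : IsProbVec μ) (hν : IsProbVec ν) (A : Set ((Fin n → Bool) × EdgeConf n L)) :
    sbmProb n a b μ ν A = 1 - sbmProb n a b μ ν Aᶜ := by
  classical
  have htot : ∑ x : (Fin n → Bool) × EdgeConf n L, sbmMass n a b μ ν x = 1 := by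
    rw [Fintype.sum_prod_type]
    simp only [sbmMass, ← Finset.mul_sum]
    simp only [cond_total hμ hν]
    simp
  unfold sbmProb
  rw [eq_sub_iff_add_eq, ← Finset.sum_add_distrib, ← htot]
  refine Finset.sum_congr rfl fun x _ => ?_
  exact congrFun (Set.indicator_self_add_compl A (sbmMass n a b μ ν)) x

lemma bad_bound [Fintype L] {m : ℕ} (hm : 0 < m) {a b : ℝ} (ha : 0 < a) (hb : 0 < b)
    {μ ν : L → ℝ} (hμ : IsProbVec μ) (hν : IsProbVec ν) (han : a ≤ (2 * m : ℕ))
    (hbn : b ≤ (2 * m : ℕ)) {w : L → ℝ} (hw : ∀ ℓ, -1 ≤ w ℓ ∧ w ℓ ≤ 1)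
    {lam : ℝ} (hl0 : 0 ≤ lam) (hl : lam ≤ 1)
    (hlS : lam ^ 2 * (∑ ℓ, (a * μ ℓ + b * ν ℓ) * w ℓ ^ 2) = 8 * Real.log 2)
    (hlD : 32 * Real.log 2 ≤ lam * ∑ ℓ, (a * μ ℓ - b * ν ℓ) * w ℓ)
    (A : Set ((Fin (2 * m) → Bool) × EdgeConf (2 * m) L))
    (hA : A = {x | ∀ σh : Fin (2 * m) → ℝ, IsSignVec σh → (∑ u, σh u) = 0 →
          (∀ σ' : Fin (2 * m) → ℝ, IsSignVec σ' → (∑ u, σ' u) = 0 →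
            cutWeight w x.2 σh ≤ cutWeight w x.2 σ') →
          0 < overlap (2 * m) (signVec x.1) σh}) :
    0 ≤ sbmProb (2 * m) a b μ ν Aᶜ ∧
    sbmProb (2 * m) a b μ ν Aᶜ ≤ 50 * (1 / (m:ℝ)) + (Real.exp (- (2 / 5 * Real.log 2))) ^ m := by
  classical
  have hm' : (0:ℝ) < m := by exact_mod_cast hm
  choose t ht ht0 htc using fun σ : Fin (2 * m) → Bool =>
    exists_balanced m (signVec σ) (isSign_signVec σ)
  set P : (Fin (2 * m) → Bool) → EdgeConf (2 * m) L → ℝ := fun σ E =>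
    ∏ p : Pairs (2 * m), sbmPairMass (2 * m) a b μ ν (σ p.1.1 == σ p.1.2) (E p) with hP
  have hP0 : ∀ σ E, 0 ≤ P σ E := fun σ E =>
    Finset.prod_nonneg fun p _ => pair_nonneg ha hb hμ hν (by omega) han hbn _ _
  have hmass : ∀ x, sbmMass (2 * m) a b μ ν x = (1 / 2 : ℝ) ^ (2 * m) * P x.1 x.2 := fun x => rfl
  have hmass0 : ∀ x, 0 ≤ sbmMass (2 * m) a b μ ν x := fun x => by
    rw [hmass]; exact mul_nonneg (by positivity) (hP0 _ _)
  set ok : (Fin (2 * m) → Bool) → (Fin (2 * m) → Bool) → Prop := fun σ τ =>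
    ∑ u, signVec τ u = 0 ∧ ∑ u, signVec τ u * signVec σ u = 0 ∧
      |∑ u, signVec σ u| ≤ (2 * m : ℝ) / 10 with hok
  set F : (Fin (2 * m) → Bool) → (Fin (2 * m) → Bool) → EdgeConf (2 * m) L → ℝ := fun σ τ E =>
    if ok σ τ then Real.exp (lam * (cutWeight w E (t σ) - cutWeight w E (signVec τ))) else 0 with hF
  have hF0 : ∀ σ τ E, 0 ≤ F σ τ E := by
    intro σ τ E; simp only [hF]; split_ifs
    · exact (Real.exp_pos _).le
    · exact le_rfl
  set G : (Fin (2 * m) → Bool) → ℝ := fun σ => (∑ u, signVec σ u) ^ 2 / ((2 * m : ℝ) / 10) ^ 2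
  have hG0 : ∀ σ, 0 ≤ G σ := fun σ => by positivity
  refine ⟨Finset.sum_nonneg fun x _ => Set.indicator_nonneg (fun x _ => hmass0 x) x, ?_⟩
  have hpt : ∀ x : (Fin (2 * m) → Bool) × EdgeConf (2 * m) L,
      Aᶜ.indicator (sbmMass (2 * m) a b μ ν) x
        ≤ (1 / 2 : ℝ) ^ (2 * m) * (P x.1 x.2 * G x.1 + ∑ τ, P x.1 x.2 * F x.1 τ x.2) := by
    rintro ⟨σ, E⟩
    have hR : (1 / 2 : ℝ) ^ (2 * m) * (P σ E * G σ + ∑ τ, P σ E * F σ τ E)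
        = sbmMass (2 * m) a b μ ν (σ, E) * (G σ + ∑ τ, F σ τ E) := by
      rw [hmass, ← Finset.mul_sum]; ring
    have hFs : 0 ≤ ∑ τ, F σ τ E := Finset.sum_nonneg fun τ _ => hF0 σ τ E
    show _ ≤ (1 / 2 : ℝ) ^ (2 * m) * (P σ E * G σ + ∑ τ, P σ E * F σ τ E)
    rw [hR]
    by_cases hx : (σ, E) ∈ Aᶜ
    · rw [Set.indicator_of_mem hx]
      refine le_mul_of_one_le_right (hmass0 _) ?_
      by_cases hbal : |∑ u, signVec σ u| ≤ (2 * m : ℝ) / 10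
      · rw [hA] at hx
        simp only [Set.mem_compl_iff, Set.mem_ofPred_eq, not_forall] at hx
        obtain ⟨y, hy, hy0, hmin, hov⟩ := hx
        have horth := overlap_orth (by omega) _ _ (isSign_signVec σ) hy hov
        have hyt : signVec (fun u => decide (y u = 1)) = y := by
          funext u
          unfold signVec
          rcases hy u with h | h
          · simp [h]
          · simp only [h]; norm_num
        have hokτ : ok σ (fun u => decide (y u = 1)) := by
          simp only [hok]; rw [hyt]; exact ⟨hy0, horth, hbal⟩
        have h1 : 1 ≤ F σ (fun u => decide (y u = 1)) E := by
          simp only [hF]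
          rw [if_pos hokτ, hyt]
          apply Real.one_le_exp
          have := hmin (t σ) (ht σ) (ht0 σ)
          exact mul_nonneg hl0 (by linarith)
        have h2 := Finset.single_le_sum (f := fun τ => F σ τ E) (fun τ _ => hF0 σ τ E)
          (Finset.mem_univ (fun u => decide (y u = 1)))
        have := hG0 σ
        linarith
      · push Not at hbal
        have : 1 ≤ G σ := by
          rw [one_le_div (by positivity), ← sq_abs (∑ u, signVec σ u)]
          exact pow_le_pow_left₀ (by positivity) hbal.le 2
        linarith
    · rw [Set.indicator_of_notMem hx]
      exact mul_nonneg (hmass0 _) (add_nonneg (hG0 σ) hFs)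
  unfold sbmProb
  refine (Finset.sum_le_sum fun x _ => hpt x).trans ?_
  rw [← Finset.mul_sum, Fintype.sum_prod_type]
  have hσ : ∀ σ : Fin (2 * m) → Bool,
      ∑ E : EdgeConf (2 * m) L, (P σ E * G σ + ∑ τ, P σ E * F σ τ E)
        ≤ G σ + 2 ^ (2 * m) * Real.exp (- (Real.log 2 * (12 / 5 * m))) := by
    intro σ
    rw [Finset.sum_add_distrib, ← Finset.sum_mul, Finset.sum_comm]
    have h1 : ∑ E, P σ E = 1 := cond_total hμ hν σ
    rw [h1, one_mul]
    gcongr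
    have : ∀ τ ∈ (Finset.univ : Finset (Fin (2 * m) → Bool)),
        ∑ E, P σ E * F σ τ E ≤ Real.exp (- (Real.log 2 * (12 / 5 * m))) := by
      intro τ _
      by_cases h : ok σ τ
      · simp only [hF, if_pos h]
        exact cond_bound hm ha hb hμ hν han hbn hw hl0 hl hlS hlD σ (t σ) (signVec τ) (ht σ)
          (isSign_signVec τ) (ht0 σ) h.1 h.2.1 h.2.2 (htc σ)
      · simp only [hF, if_neg h, mul_zero, Finset.sum_const_zero]
        exact (Real.exp_pos _).le
    refine (Finset.sum_le_sum this).trans (le_of_eq ?_)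
    simp
  refine (mul_le_mul_of_nonneg_left (Finset.sum_le_sum fun σ _ => hσ σ) (by positivity)).trans ?_
  rw [Finset.sum_add_distrib, ← Finset.sum_div, sum_sq_sign, Finset.sum_const, nsmul_eq_mul]
  have hcard : ((Finset.univ : Finset (Fin (2 * m) → Bool)).card : ℝ) = 2 ^ (2 * m) := by simp
  rw [hcard, mul_add]
  have h22 : (1 / 2 : ℝ) ^ (2 * m) * 2 ^ (2 * m) = 1 := by rw [← mul_pow]; norm_num
  apply add_le_add
  · have : (1 / 2 : ℝ) ^ (2 * m) * (((2 * m : ℕ) : ℝ) * 2 ^ (2 * m) / ((2 * m : ℝ) / 10) ^ 2)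
        = ((1 / 2 : ℝ) ^ (2 * m) * 2 ^ (2 * m)) * ((2 * m : ℝ) / ((2 * m : ℝ) / 10) ^ 2) := by
      push_cast; ring
    rw [this, h22]
    apply le_of_eq
    field_simp
    norm_num
  · rw [← mul_assoc, h22, one_mul]
    have h2e : (2:ℝ) ^ (2 * m) = Real.exp (Real.log 2 * (2 * m)) := by
      rw [← Real.rpow_natCast, Real.rpow_def_of_pos (by norm_num)]
      push_cast; rfl
    rw [h2e, ← Real.exp_add, ← Real.exp_nat_mul]
    apply le_of_eq
    congr 1
    ring

/-- **Theorem (Minimum bisection, Theorem 1).**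
Under the labeled SBM `𝒢(n, a/n, b/n, μ, ν)` with `n` even and a weight function
`w : 𝓛 → [-1,1]`, under the stated technical conditions and the gap condition,
a.a.s. every minimizer of the weighted minimum bisection has positive overlap
with the true type assignment. -/
theorem min_bisection_correlated
    {L : Type*} [Fintype L] (a b : ℝ) (ha : 0 < a) (hb : 0 < b)
    (μ ν : L → ℝ) (hμ : IsProbVec μ) (hν : IsProbVec ν)
    (w : L → ℝ) (hw : ∀ ℓ, -1 ≤ w ℓ ∧ w ℓ ≤ 1)
    (htech1 : 8 * Real.log 2 < ∑ ℓ, a * μ ℓ * w ℓ ^ 2)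
    (htech2 : 8 * Real.log 2 < ∑ ℓ, b * ν ℓ * w ℓ ^ 2)
    (hgap : Real.sqrt (128 * Real.log 2) <
      (∑ ℓ, (a * μ ℓ - b * ν ℓ) * w ℓ) /
        Real.sqrt (∑ ℓ, (a * μ ℓ + b * ν ℓ) * w ℓ ^ 2)) :
    Filter.Tendsto (fun m : ℕ =>
      sbmProb (2 * m) a b μ ν
        {x | ∀ σh : Fin (2 * m) → ℝ, IsSignVec σh → (∑ u, σh u) = 0 →
          (∀ σ' : Fin (2 * m) → ℝ, IsSignVec σ' → (∑ u, σ' u) = 0 →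
            cutWeight w x.2 σh ≤ cutWeight w x.2 σ') →
          0 < overlap (2 * m) (signVec x.1) σh})
      Filter.atTop (nhds 1) := by
  set S := ∑ ℓ, (a * μ ℓ + b * ν ℓ) * w ℓ ^ 2 with hS
  set Δ := ∑ ℓ, (a * μ ℓ - b * ν ℓ) * w ℓ with hΔ
  have hlog : 0 < Real.log 2 := Real.log_pos (by norm_num)
  have hSsum : S = ∑ ℓ, a * μ ℓ * w ℓ ^ 2 + ∑ ℓ, b * ν ℓ * w ℓ ^ 2 := by
    rw [hS, ← Finset.sum_add_distrib]
    exact Finset.sum_congr rfl fun ℓ _ => by ring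
  have hS8 : 8 * Real.log 2 ≤ S := by linarith
  have hS0 : 0 < S := by linarith
  have hsq : 0 < Real.sqrt S := Real.sqrt_pos.2 hS0
  set lam := Real.sqrt (8 * Real.log 2) / Real.sqrt S with hlam
  have hl0 : 0 ≤ lam := by positivity
  have hl : lam ≤ 1 := by
    rw [hlam, div_le_one hsq]; exact Real.sqrt_le_sqrt hS8
  have hlS : lam ^ 2 * S = 8 * Real.log 2 := by
    rw [hlam, div_pow, Real.sq_sqrt (by positivity), Real.sq_sqrt hS0.le]
    field_simp
  have hlD : 32 * Real.log 2 ≤ lam * Δ := by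
    have h1 : lam * Δ = Real.sqrt (8 * Real.log 2) * (Δ / Real.sqrt S) := by
      rw [hlam]; ring
    have h2 : Real.sqrt (8 * Real.log 2) * Real.sqrt (128 * Real.log 2) = 32 * Real.log 2 := by
      rw [← Real.sqrt_mul (by positivity)]
      rw [show 8 * Real.log 2 * (128 * Real.log 2) = (32 * Real.log 2) ^ 2 by ring]
      exact Real.sqrt_sq (by positivity)
    rw [h1, ← h2]
    exact mul_le_mul_of_nonneg_left hgap.le (Real.sqrt_nonneg _)
  have hlim : Filter.Tendsto (fun m : ℕ =>
      50 * (1 / (m:ℝ)) + (Real.exp (- (2 / 5 * Real.log 2))) ^ m) Filter.atTop (nhds 0) := by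
    have h1 := (tendsto_one_div_atTop_nhds_zero_nat (𝕜 := ℝ)).const_mul 50
    have h2 := tendsto_pow_atTop_nhds_zero_of_lt_one
      (Real.exp_pos (- (2 / 5 * Real.log 2))).le (by rw [← Real.exp_zero]; exact Real.exp_lt_exp.2 (by linarith))
    simpa using h1.add h2
  have hev : ∀ᶠ m : ℕ in Filter.atTop, 0 < m ∧ a ≤ (2 * m : ℕ) ∧ b ≤ (2 * m : ℕ) := by
    have e1 := Filter.eventually_ge_atTop (α := ℕ) (max 1 (max ⌈a⌉₊ ⌈b⌉₊))
    filter_upwards [e1] with m hm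
    have h1 : 1 ≤ m := le_trans (le_max_left _ _) hm
    have h2 : ⌈a⌉₊ ≤ m := le_trans ((le_max_left _ _).trans (le_max_right _ _)) hm
    have h3 : ⌈b⌉₊ ≤ m := le_trans ((le_max_right _ _).trans (le_max_right _ _)) hm
    have h4 := Nat.ceil_le.1 h2
    have h5 := Nat.ceil_le.1 h3
    push_cast
    refine ⟨h1, ?_, ?_⟩ <;> linarith
  refine (Filter.tendsto_congr (fun m => prob_compl hμ hν _)).2 ?_
  have e1 : nhds (1:ℝ) = nhds (1 - 0) := by rw [sub_zero]
  rw [e1]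
  refine Filter.Tendsto.sub tendsto_const_nhds ?_
  refine tendsto_of_tendsto_of_tendsto_of_le_of_le' tendsto_const_nhds hlim ?_ ?_
  · filter_upwards [hev] with m hm
    exact (bad_bound hm.1 ha hb hμ hν hm.2.1 hm.2.2 hw hl0 hl hlS hlD _ rfl).1
  · filter_upwards [hev] with m hm
    exact (bad_bound hm.1 ha hb hμ hν hm.2.1 hm.2.2 hw hl0 hl hlS hlD _ rfl).2

end LSBM
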